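/- arXiv:2107.11745 — 2 statements merged into one kernel-verified Lean document; each statement's English description precedes it below -/
import Mathlib

section
/- Let λ be a real number with λ > 1, let z₀ ∈ ℂ and φ ∈ ℝ. Suppose n : ℕ → ℕ and t : ℕ → ℝ are sequences with t k → +∞ as k → ∞, and suppose w ∈ ℂ with w ≠ 0 is such that (λ ^ (n k))⁻¹ • (z₀ + (t k) • e^{iφ}) converges to w. Then there exists a real number s > 0 with w = s • e^{iφ}. -/
open Filter

/-- Every nonzero accumulation point of the `λ`-orbit of the line `{z₀ + t·e^{iφ}}`
as `t → +∞` lies on the open ray `{s·e^{iφ} : s > 0}`. -/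
theorem accumulation_point_mem_ray (l : ℝ) (hl : 1 < l) (z₀ : ℂ) (φ : ℝ)
    (n : ℕ → ℕ) (t : ℕ → ℝ) (ht : Tendsto t atTop atTop) (w : ℂ) (hw : w ≠ 0)
    (hconv : Tendsto (fun k => (l ^ (n k))⁻¹ • (z₀ + (t k) • Complex.exp (φ * Complex.I)))
      atTop (nhds w)) :
    ∃ s : ℝ, 0 < s ∧ w = s • Complex.exp (φ * Complex.I) := by
  set e := Complex.exp (φ * Complex.I) with he
  have he0 : e ≠ 0 := Complex.exp_ne_zero _
  have hu : Tendsto (fun k => (t k)⁻¹ • z₀ + e) atTop (nhds e) := by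
    have h1 : Tendsto (fun k => (t k)⁻¹) atTop (nhds 0) := tendsto_inv_atTop_zero.comp ht
    have h2 := (h1.smul_const z₀).add_const e
    simpa using h2
  have hq := hconv.div hu he0
  have hev : ∀ᶠ k in atTop, ((l ^ (n k))⁻¹ • (z₀ + (t k) • e)) / ((t k)⁻¹ • z₀ + e)
      = (((l ^ (n k))⁻¹ * t k : ℝ) : ℂ) := by
    filter_upwards [hu.eventually_ne he0, ht.eventually_gt_atTop 0] with k hk htk
    rw [div_eq_iff hk]
    have htc : (t k : ℂ) ≠ 0 := by exact_mod_cast htk.ne'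
    simp only [Complex.real_smul, Complex.ofReal_mul, Complex.ofReal_inv]
    rw [mul_assoc, mul_add (t k : ℂ), mul_inv_cancel_left₀ htc]
  have hlim : Tendsto (fun k => (((l ^ (n k))⁻¹ * t k : ℝ) : ℂ)) atTop (nhds (w / e)) :=
    Tendsto.congr' hev hq
  have hre := (Complex.continuous_re.tendsto _).comp hlim
  have him := (Complex.continuous_im.tendsto _).comp hlim
  have him0 : (w / e).im = 0 := by
    refine tendsto_nhds_unique him ?_
    simp only [Function.comp_def, Complex.ofReal_im]
    exact tendsto_const_nhds
  have hre0 : 0 ≤ (w / e).re := by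
    refine ge_of_tendsto hre ?_
    filter_upwards [ht.eventually_gt_atTop 0] with k htk
    simp only [Function.comp_def, Complex.ofReal_re]
    positivity
  have hwe : w / e = ((w / e).re : ℂ) := Complex.ext (by simp) (by simpa using him0)
  refine ⟨(w / e).re, lt_of_le_of_ne hre0 ?_, ?_⟩
  · intro h
    rw [← h] at hwe
    exact div_ne_zero hw he0 (by simpa using hwe)
  · rw [Complex.real_smul, ← hwe, div_mul_cancel₀ _ he0]
end

section
/- Let λ be a real number with λ > 1, let z₀ ∈ ℂ and φ ∈ ℝ. Then the set of all w ∈ ℂ with w ≠ 0 for which there exist sequences n : ℕ → ℕ and t : ℕ → ℝ with t k → +∞ such that (λ ^ (n k))⁻¹ • (z₀ + (t k) • e^{iφ}) converges to w, is exactly the open ray {s • e^{iφ} : s ∈ ℝ, s > 0}. -/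
open Filter

/-- The set of nonzero accumulation points of the `λ`-orbit of the line
`{z₀ + t·e^{iφ}}` as `t → +∞` is exactly the open ray `{s·e^{iφ} : s > 0}`. -/
theorem accumulation_set_eq_ray (l : ℝ) (hl : 1 < l) (z₀ : ℂ) (φ : ℝ) :
    {w : ℂ | w ≠ 0 ∧ ∃ (n : ℕ → ℕ) (t : ℕ → ℝ), Tendsto t atTop atTop ∧
        Tendsto (fun k => (l ^ (n k))⁻¹ • (z₀ + (t k) • Complex.exp (φ * Complex.I)))
          atTop (nhds w)} =
      {w : ℂ | ∃ s : ℝ, 0 < s ∧ w = s • Complex.exp (φ * Complex.I)} := by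
  have hu : Complex.exp (φ * Complex.I) ≠ 0 := Complex.exp_ne_zero _
  generalize Complex.exp (φ * Complex.I) = u at hu
  have hl0 : 0 < l := by linarith
  ext w
  constructor
  · rintro ⟨hw, n, t, ht, hx⟩
    have h1 : Tendsto (fun k => (t k)⁻¹ • z₀ + u) atTop (nhds u) := by
      simpa using (ht.inv_tendsto_atTop.smul_const z₀).add_const u
    have h2 := hx.div h1 hu
    have h3 : Tendsto (fun k => (((l ^ n k)⁻¹ * t k : ℝ) : ℂ)) atTop (nhds (w / u)) := by
      refine h2.congr' ?_
      filter_upwards [ht.eventually_gt_atTop 0, h1.eventually_ne hu] with k hk hne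
      have hkc : (t k : ℂ) ≠ 0 := by exact_mod_cast hk.ne'
      simp only [Pi.div_apply]
      rw [div_eq_iff hne]
      simp only [Complex.real_smul]
      push_cast
      field_simp
    have h4 : Tendsto (fun k => (l ^ n k)⁻¹ * t k) atTop (nhds (w / u).re) := by
      simpa only [Function.comp_def, Complex.ofReal_re] using
        (Complex.continuous_re.tendsto (w / u)).comp h3
    have h5 : w / u = ((w / u).re : ℂ) :=
      tendsto_nhds_unique h3 ((Complex.continuous_ofReal.tendsto _).comp h4)
    have h6 : 0 ≤ (w / u).re := by
      refine ge_of_tendsto h4 ?_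
      filter_upwards [ht.eventually_gt_atTop 0] with k hk
      positivity
    have h7 : (w / u).re ≠ 0 := by
      intro h0
      rw [h0] at h5
      exact div_ne_zero hw hu (by simpa using h5)
    refine ⟨(w / u).re, lt_of_le_of_ne h6 h7.symm, ?_⟩
    rw [Complex.real_smul, ← h5, div_mul_cancel₀ _ hu]
  · rintro ⟨s, hs, rfl⟩
    have hp := tendsto_pow_atTop_atTop_of_one_lt hl
    refine ⟨smul_ne_zero hs.ne' hu, fun k => k, fun k => l ^ k * s, hp.atTop_mul_const hs, ?_⟩
    have h1 : Tendsto (fun k => (l ^ k)⁻¹ • z₀ + s • u) atTop (nhds (s • u)) := by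
      simpa using (hp.inv_tendsto_atTop.smul_const z₀).add_const (s • u)
    refine h1.congr fun k => ?_
    have : l ^ k ≠ 0 := by positivity
    rw [smul_add, smul_smul, inv_mul_cancel_left₀ this]
end
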